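/- arXiv:2605.11287 — 3 statements merged into one kernel-verified Lean document; each statement's English description precedes it below -/
import Mathlib

section
/- Let N, d, d_h ≥ 1 be integers and let m ∈ {1,…,N}. Suppose t ∈ ℝ^N does not belong to the standard simplex Δ^{N-1}. Then for every choice of parameter matrices W_Q, W_K ∈ ℝ^{d_h×d}, it is NOT the case that o_m(H) = ∑_{n=1}^N t_n · H_{n,1} holds for all H ∈ ℝ^{N×d}. (Proposition 1: the simplex-constrained mixing limitation of single-head softmax self-attention.) -/
open Matrix BigOperators Real

/-- The score matrix `A(H) = H Wqᵀ Wk Hᵀ` of single-head self-attention. -/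
noncomputable def score {N d dh : ℕ} (Wq Wk : Matrix (Fin dh) (Fin d) ℝ)
    (H : Matrix (Fin N) (Fin d) ℝ) : Matrix (Fin N) (Fin N) ℝ :=
  H * Wqᵀ * Wk * Hᵀ

/-- The softmax attention kernel `a_{m,n}(H)`. -/
noncomputable def attnKernel {N d dh : ℕ} (Wq Wk : Matrix (Fin dh) (Fin d) ℝ)
    (H : Matrix (Fin N) (Fin d) ℝ) (m n : Fin N) : ℝ :=
  Real.exp (score Wq Wk H m n) / ∑ j, Real.exp (score Wq Wk H m j)

/-!
Pairing a vector with a standard basis vector reads off an entry, and pairing it with the all-ones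
vector reads off the sum of its entries, so membership in the simplex can be tested one pairing at a
time. Every row of the attention kernel lies in the simplex; it therefore suffices to use inputs
whose first column is a test vector, and it does not matter that the row changes with the input.
-/

section StdSimplex

variable {ι : Type*} [Fintype ι]

theorem mem_stdSimplex_of_forall_exists_dotProduct_eq {R : Type*} [Semiring R] [PartialOrder R]
    {t : ι → R} (ht : ∀ v : ι → R, ∃ w ∈ stdSimplex R ι, w ⬝ᵥ v = t ⬝ᵥ v) :
    t ∈ stdSimplex R ι := by
  classical
  constructor
  · intro i
    obtain ⟨w, hw, hwt⟩ := ht (Pi.single i 1)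
    have entry_eq : w i = t i := by simpa only [dotProduct_single_one] using hwt
    exact entry_eq ▸ hw.1 i
  · obtain ⟨w, hw, hwt⟩ := ht 1
    have sum_eq : ∑ i, w i = ∑ i, t i := by simpa only [dotProduct_one] using hwt
    exact sum_eq ▸ hw.2

theorem div_sum_mem_stdSimplex {𝕜 : Type*} [Semifield 𝕜] [LinearOrder 𝕜] [IsStrictOrderedRing 𝕜]
    {x : ι → 𝕜} (hx : 0 ≤ x) (hsum : ∑ j, x j ≠ 0) :
    (fun i ↦ x i / ∑ j, x j) ∈ stdSimplex 𝕜 ι :=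
  ⟨fun i ↦ div_nonneg (hx i) (Finset.sum_nonneg fun j _ ↦ hx j), by
    rw [← Finset.sum_div, div_self hsum]⟩

end StdSimplex

theorem attnKernel_mem_stdSimplex {N d dh : ℕ} (Wq Wk : Matrix (Fin dh) (Fin d) ℝ)
    (H : Matrix (Fin N) (Fin d) ℝ) (m : Fin N) :
    attnKernel Wq Wk H m ∈ stdSimplex ℝ (Fin N) := by
  have sum_exp_pos : 0 < ∑ j, Real.exp (score Wq Wk H m j) :=
    Finset.sum_pos (fun j _ ↦ Real.exp_pos _) ⟨m, Finset.mem_univ m⟩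
  exact div_sum_mem_stdSimplex (fun j ↦ (Real.exp_pos _).le) sum_exp_pos.ne'

/-- **Proposition 1 (simplex-constrained mixing limitation).**
If the target row `t ∈ ℝ^N` is not in the standard simplex `Δ^{N-1}`, then for
every choice of parameter matrices `Wq, Wk ∈ ℝ^{dh×d}`, single-head softmax
self-attention with scalar values `v_n = H_{n,1}` cannot satisfy
`o_m(H) = ∑ n, t_n · H_{n,1}` for all inputs `H ∈ ℝ^{N×d}`. -/
theorem softmax_simplex_limitation
    {N d dh : ℕ} (hN : 1 ≤ N) (hd : 1 ≤ d) (hdh : 1 ≤ dh)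
    (m : Fin N) (t : Fin N → ℝ)
    (ht : ¬ ((∀ n, 0 ≤ t n) ∧ ∑ n, t n = 1)) :
    ∀ Wq Wk : Matrix (Fin dh) (Fin d) ℝ,
      ¬ (∀ H : Matrix (Fin N) (Fin d) ℝ,
          ∑ n, attnKernel Wq Wk H m n * H n ⟨0, hd⟩ = ∑ n, t n * H n ⟨0, hd⟩) := by
  intro Wq Wk output_eq
  refine ht (mem_stdSimplex_of_forall_exists_dotProduct_eq fun v ↦ ?_)
  let H : Matrix (Fin N) (Fin d) ℝ := Matrix.of fun n _ ↦ v n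
  exact ⟨attnKernel Wq Wk H m, attnKernel_mem_stdSimplex Wq Wk H m, output_eq H⟩
end

section
/- Let N, d, d_h ≥ 1 and let T ∈ ℝ^{N×N} satisfy T 1 = 0 (every row sums to zero). Then for every row index m and every choice of W_Q, W_K ∈ ℝ^{d_h×d}, it is NOT the case that o_m(H) = ∑_{n=1}^N T_{m,n} · H_{n,1} for all H ∈ ℝ^{N×d}. (Zero-row-sum operators are unrealizable by single-head softmax self-attention, the failure mode common to harmonic continuation, residualization, and local quadrature projection.) -/
open Matrix BigOperators Real

theorem sum_attnKernel {N d dh : ℕ} (Wq Wk : Matrix (Fin dh) (Fin d) ℝ)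
    (H : Matrix (Fin N) (Fin d) ℝ) (m : Fin N) : ∑ n, attnKernel Wq Wk H m n = 1 := by
  have normalizer_pos : 0 < ∑ j, exp (score Wq Wk H m j) :=
    Finset.sum_pos (fun j _ => exp_pos _) ⟨m, Finset.mem_univ m⟩
  simp only [attnKernel]
  rw [← Finset.sum_div, div_self normalizer_pos.ne']

theorem sum_attnKernel_mul_of_column_eq_const {N d dh : ℕ} (Wq Wk : Matrix (Fin dh) (Fin d) ℝ)
    {H : Matrix (Fin N) (Fin d) ℝ} {k : Fin d} {c : ℝ} (hH : ∀ n, H n k = c) (m : Fin N) :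
    ∑ n, attnKernel Wq Wk H m n * H n k = c := by
  simp only [hH]
  rw [← Finset.sum_mul, sum_attnKernel, one_mul]

theorem zero_row_sum_unrealizable_general {N d dh : ℕ} (T : Matrix (Fin N) (Fin N) ℝ)
    {m : Fin N} (hTm : ∑ n, T m n ≠ 1) (k : Fin d) (Wq Wk : Matrix (Fin dh) (Fin d) ℝ) :
    ¬ ∀ H : Matrix (Fin N) (Fin d) ℝ,
        ∑ n, attnKernel Wq Wk H m n * H n k = ∑ n, T m n * H n k := by
  intro realizes
  let ones : Matrix (Fin N) (Fin d) ℝ := of fun _ _ => 1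
  apply hTm
  calc ∑ n, T m n = ∑ n, T m n * ones n k := by simp [ones]
    _ = ∑ n, attnKernel Wq Wk ones m n * ones n k := (realizes ones).symm
    _ = 1 := sum_attnKernel_mul_of_column_eq_const Wq Wk (fun _ => rfl) m

/-- **Zero-row-sum operators are unrealizable by single-head softmax
self-attention.** If every row of `T ∈ ℝ^{N×N}` sums to zero (`T 1 = 0`), then
for every row `m` and all parameters `Wq, Wk`, it is not the case that
`o_m(H) = ∑ n, T_{m,n} · H_{n,1}` for all `H ∈ ℝ^{N×d}`. -/
theorem zero_row_sum_unrealizable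
    {N d dh : ℕ} (hN : 1 ≤ N) (hd : 1 ≤ d) (hdh : 1 ≤ dh)
    (T : Matrix (Fin N) (Fin N) ℝ)
    (hT : T *ᵥ (fun _ => (1 : ℝ)) = 0) :
    ∀ (m : Fin N) (Wq Wk : Matrix (Fin dh) (Fin d) ℝ),
      ¬ (∀ H : Matrix (Fin N) (Fin d) ℝ,
          ∑ n, attnKernel Wq Wk H m n * H n ⟨0, hd⟩ = ∑ n, T m n * H n ⟨0, hd⟩) := by
  intro m
  have row_sum : ∑ n, T m n = 0 := by simpa [mulVec, dotProduct] using congrFun hT m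
  exact zero_row_sum_unrealizable_general T (row_sum.trans_ne zero_ne_one) ⟨0, hd⟩
end

section
/- Let N, d, d_h ≥ 1 and let T ∈ ℝ^{N×N} have a strictly negative entry T_{m,k} < 0 for some indices m, k. Then row m of T lies outside the standard simplex Δ^{N-1}, and for every choice of W_Q, W_K ∈ ℝ^{d_h×d}, it is NOT the case that o_m(H) = ∑_{n=1}^N T_{m,n} · H_{n,1} for all H ∈ ℝ^{N×d}. In particular, softmax attention over patch tokens cannot compute inter-patch differencing operators (T_{m,m} > 0 and T_{m,k} < 0), and softmax attention over inverted (channel) tokens cannot compute cross-variate demixing operators with negative coefficients. (Patch and inverted tokenization failure lemmas.) -/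
open Matrix BigOperators Real

section Kernel

variable {ι κ R : Type*} [Fintype ι] [Semiring R]
  {a : Matrix ι κ R → ι → R} {t : ι → R}

/- However the weights `a H` depend on the input, evaluating at the indicator of a token `k` reads
off `t k` as one of these weights, and evaluating at the constant `1` reads off `∑ n, t n` as a
total weight; so `t` inherits nonnegativity and normalization from `a`. -/

theorem coeff_eq_kernel_single [DecidableEq ι] {c : κ}
    (h : ∀ H : Matrix ι κ R, ∑ n, a H n * H n c = ∑ n, t n * H n c) (k : ι) :
    t k = a (replicateCol κ (Pi.single k 1)) k := by
  simpa [Pi.single_apply] using (h (replicateCol κ (Pi.single k 1))).symm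

theorem sum_coeff_eq_sum_kernel_one {c : κ}
    (h : ∀ H : Matrix ι κ R, ∑ n, a H n * H n c = ∑ n, t n * H n c) :
    ∑ n, t n = ∑ n, a (replicateCol κ 1) n := by
  simpa using (h (replicateCol κ 1)).symm

theorem negative_entry_unrealizable_general [PartialOrder R]
    (ha : ∀ H, a H ∈ stdSimplex R ι) (c : κ) (ht : t ∉ stdSimplex R ι) :
    ¬ ∀ H : Matrix ι κ R, ∑ n, a H n * H n c = ∑ n, t n * H n c := by
  classical
  intro h
  have t_nonneg (k : ι) : 0 ≤ t k := (coeff_eq_kernel_single h k).symm ▸ (ha _).1 k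
  have sum_t : ∑ n, t n = 1 := (sum_coeff_eq_sum_kernel_one h).trans (ha _).2
  exact ht ⟨t_nonneg, sum_t⟩

end Kernel

/-- **Patch and inverted tokenization failure lemmas.**
If `T ∈ ℝ^{N×N}` has a strictly negative entry `T_{m,k} < 0`, then row `m` of
`T` lies outside the standard simplex `Δ^{N-1}`, and for every choice of
parameters `Wq, Wk`, single-head softmax attention cannot satisfy
`o_m(H) = ∑ n, T_{m,n} · H_{n,1}` for all `H ∈ ℝ^{N×d}`. In particular softmax
attention cannot compute inter-patch differencing or signed cross-variate
demixing operators. -/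
theorem negative_entry_unrealizable
    {N d dh : ℕ} (hN : 1 ≤ N) (hd : 1 ≤ d) (hdh : 1 ≤ dh)
    (T : Matrix (Fin N) (Fin N) ℝ) (m k : Fin N) (hneg : T m k < 0) :
    (¬ ((∀ n, 0 ≤ T m n) ∧ ∑ n, T m n = 1)) ∧
    ∀ Wq Wk : Matrix (Fin dh) (Fin d) ℝ,
      ¬ (∀ H : Matrix (Fin N) (Fin d) ℝ,
          ∑ n, attnKernel Wq Wk H m n * H n ⟨0, hd⟩ = ∑ n, T m n * H n ⟨0, hd⟩) := by
  have row_notMem : T m ∉ stdSimplex ℝ (Fin N) := fun hT => (hT.1 k).not_gt hneg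
  exact ⟨row_notMem, fun Wq Wk =>
    negative_entry_unrealizable_general (attnKernel_mem_stdSimplex Wq Wk · m) ⟨0, hd⟩ row_notMem⟩
end
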